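/- Let v1, v2, v3 ∈ ℝ² be three non-collinear points with ‖v1 − v3‖ ≤ ‖v2 − v3‖ ≤ ‖v1 − v2‖, and let θ₃ be the angle of the triangle at vertex v2, i.e. the angle between v1 − v2 and v3 − v2. Then p13 = (1/π)·∫₀^π P_{13}(φ) dφ ≥ (π − θ₃)/(2π). -/

import Mathlib

open Real MeasureTheory

/-- Projection of a point of `ℝ²` onto the unit direction `(cos φ, sin φ)`. -/
noncomputable def proj (v : EuclideanSpace ℝ (Fin 2)) (φ : ℝ) : ℝ :=
  v 0 * Real.cos φ + v 1 * Real.sin φ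

/-- Probability that a uniformly random cut point in the projected range separates the point
projecting to `xm` from the pair projecting to `xi, xj`, i.e. that the pair `{i,j}` survives. -/
noncomputable def cutProb (xi xj xm : ℝ) : ℝ :=
  if (xm < xi ∧ xm < xj) ∨ (xi < xm ∧ xj < xm) then
    min |xm - xi| |xm - xj| / (max xi (max xj xm) - min xi (min xj xm))
  else 0

/-- `p_{ij}`: the probability that the pair `{vi, vj}` (third point `vm`) survives the
projected random cut, averaged over a uniform projection angle `φ ∈ [0, π)`. -/
noncomputable def survProb (vi vj vm : EuclideanSpace ℝ (Fin 2)) : ℝ :=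
  (1 / Real.pi) * ∫ φ in (0:ℝ)..Real.pi, cutProb (proj vi φ) (proj vj φ) (proj vm φ)

/-!
Put the origin at `v2`, let `A`, `B` be the lengths of the sides from `v2` to `v1`, `v3`, and let
`θ` be the angle between them. After a rotation or a reflection the projections are `A cos t` and
`B cos (t - θ)`. For `t` in `(θ - π/2, π/2)`, an interval of length `π - θ`, both are positive, so
the integrand is the ratio of the smaller to the larger; elsewhere we only use that it is
nonnegative. The two projections cross at the direction `s` perpendicular to the side `v1 v3`,
which cuts the interval in two. On each part the sum of the ratios at two directions symmetric
about the midpoint is at least `1`, because `v1 v3` is the shortest side; hence the mean of the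
ratio is at least `1/2`.
-/

section CutProb

theorem cutProb_sub_const (x y z c : ℝ) :
    cutProb (x - c) (y - c) (z - c) = cutProb x y z := by
  simp only [cutProb, sub_lt_sub_iff_right, sub_sub_sub_cancel_right, max_sub_sub_right,
    min_sub_sub_right]

theorem cutProb_neg (x y z : ℝ) : cutProb (-x) (-y) (-z) = cutProb x y z := by
  simp only [cutProb, neg_lt_neg_iff, max_neg_neg, min_neg_neg, neg_sub_neg, or_comm,
    abs_sub_comm]

theorem cutProb_comm (x y z : ℝ) : cutProb x y z = cutProb y x z := by
  simp only [cutProb, min_comm (|z - x|), max_left_comm x, min_left_comm x, and_comm]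

theorem cutProb_nonneg (x y z : ℝ) : 0 ≤ cutProb x y z := by
  unfold cutProb
  split_ifs
  · have hrange : min x (min y z) ≤ max x (max y z) := (min_le_left _ _).trans (le_max_left _ _)
    exact div_nonneg (by positivity) (sub_nonneg.2 hrange)
  · exact le_rfl

theorem cutProb_le_one (x y z : ℝ) : cutProb x y z ≤ 1 := by
  unfold cutProb
  split_ifs
  · have hx : x ∈ Set.Icc (min x (min y z)) (max x (max y z)) := by simp
    have hz : z ∈ Set.Icc (min x (min y z)) (max x (max y z)) := by simp
    exact div_le_one_of_le₀ ((min_le_left _ _).trans (Real.dist_le_of_mem_Icc hz hx))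
      (sub_nonneg.2 (hx.1.trans hx.2))
  · exact zero_le_one

theorem cutProb_zero_eq_div {x y : ℝ} (hy : 0 < y) (hyx : y ≤ x) : cutProb x y 0 = y / x := by
  have hx : 0 < x := hy.trans_le hyx
  rw [cutProb, if_pos (Or.inl ⟨hx, hy⟩)]
  simp only [zero_sub, abs_neg, abs_of_pos hx, abs_of_pos hy, min_eq_right hyx,
    max_eq_left hy.le, max_eq_left hyx, min_eq_right hy.le, min_eq_right hx.le, sub_zero]

theorem measurable_cutProb_comp {α : Type*} [MeasurableSpace α] {f g h : α → ℝ}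
    (hf : Measurable f) (hg : Measurable g) (hh : Measurable h) :
    Measurable fun a => cutProb (f a) (g a) (h a) := by
  unfold cutProb
  refine Measurable.ite ?_ (by fun_prop) measurable_const
  exact ((measurableSet_lt hh hf).inter (measurableSet_lt hh hg)).union
    ((measurableSet_lt hf hh).inter (measurableSet_lt hg hh))

theorem intervalIntegrable_cutProb_comp {f g h : ℝ → ℝ} (hf : Measurable f) (hg : Measurable g)
    (hh : Measurable h) (a b : ℝ) :
    IntervalIntegrable (fun t => cutProb (f t) (g t) (h t)) volume a b := by
  refine (intervalIntegrable_const (c := (1 : ℝ))).mono_fun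
    (measurable_cutProb_comp hf hg hh).aestronglyMeasurable (.of_forall fun t => ?_)
  simpa only [Real.norm_eq_abs, abs_of_nonneg (cutProb_nonneg _ _ _), abs_one]
    using cutProb_le_one _ _ _

end CutProb

theorem mul_sub_le_integral_of_two_mul_le_add_reflect {f : ℝ → ℝ} {a b c : ℝ} (hab : a ≤ b)
    (hf : IntervalIntegrable f volume a b)
    (h : ∀ t ∈ Set.Ioo a b, 2 * c ≤ f t + f (a + b - t)) :
    c * (b - a) ≤ ∫ t in a..b, f t := by
  have hf_reflect : IntervalIntegrable (fun t => f (a + b - t)) volume a b := by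
    simpa using (hf.comp_sub_left (a + b)).symm
  have hint_reflect : ∫ t in a..b, f (a + b - t) = ∫ t in a..b, f t := by simp
  have hint : ∫ _ in a..b, 2 * c ≤ ∫ t in a..b, (f t + f (a + b - t)) :=
    intervalIntegral.integral_mono_on_of_le_Ioo hab intervalIntegrable_const
      (hf.add hf_reflect) h
  rw [intervalIntegral.integral_add hf hf_reflect, hint_reflect, intervalIntegral.integral_const,
    smul_eq_mul] at hint
  linarith

section Trigonometry

variable {A B θ s : ℝ}

theorem exists_mul_cos_sub_mul_cos_eq_mul_sin (hA : 0 < A) (hB : 0 ≤ B) (hθ : 0 ≤ θ)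
    (hθπ : θ < π) :
    ∃ s ∈ Set.Icc (θ - π / 2) (π / 2), ∃ R, 0 ≤ R ∧
      ∀ t, A * cos t - B * cos (t - θ) = R * sin (s - t) := by
  -- The left-hand side expands to `z.im * cos t - z.re * sin t`, so `s` is the argument of `z`.
  set z : ℂ := ⟨B * sin θ, A - B * cos θ⟩
  have hsin : 0 ≤ sin θ := sin_nonneg_of_nonneg_of_le_pi hθ hθπ.le
  obtain ⟨hlower, hupper⟩ : -(π / 2) ≤ z.arg ∧ z.arg ≤ π / 2 :=
    abs_le.1 (Complex.abs_arg_le_pi_div_two_iff.2 (mul_nonneg hB hsin))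
  have hsinusoid (t : ℝ) : A * cos t - B * cos (t - θ) = ‖z‖ * sin (z.arg - t) := by
    have hre : ‖z‖ * cos z.arg = B * sin θ := Complex.norm_mul_cos_arg z
    have him : ‖z‖ * sin z.arg = A - B * cos θ := Complex.norm_mul_sin_arg z
    rw [cos_sub, sin_sub]
    linear_combination sin t * hre - cos t * him
  refine ⟨z.arg, ⟨?_, hupper⟩, ‖z‖, norm_nonneg z, hsinusoid⟩
  by_contra! hlt
  have hθ_pos : 0 < θ := by linarith
  have hneg : sin (z.arg - (θ - π / 2)) ≤ 0 :=
    sin_nonpos_of_nonpos_of_neg_pi_le (by linarith) (by linarith)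
  have hvalue : A * sin θ = ‖z‖ * sin (z.arg - (θ - π / 2)) := by
    rw [← hsinusoid, cos_sub_pi_div_two, sub_sub_cancel_left, cos_neg, cos_pi_div_two]
    ring
  have hpos : 0 < A * sin θ := mul_pos hA (sin_pos_of_pos_of_lt_pi hθ_pos hθπ)
  exact (hvalue ▸ hpos).not_ge (mul_nonpos_of_nonneg_of_nonpos (norm_nonneg z) hneg)

theorem mul_cos_mul_cos_le_of_add_eq {t t' : ℝ} (hsin : 0 ≤ sin θ) (hAB : A ≤ 2 * B * cos θ)
    (hs : A * cos s ≤ B * cos (s - θ)) (hsπ : s - (θ - π / 2) ≤ π)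
    (hadd : t + t' = θ - π / 2 + s) (hsub : |t - t'| ≤ s - (θ - π / 2)) :
    A * cos t * cos t' ≤ B * cos (t - θ) * cos t' + B * cos (t' - θ) * cos t := by
  have hcos_sub : sin (θ - s) ≤ cos (t - t') := by
    rw [← cos_abs (t - t'), ← cos_sub_pi_div_two, ← cos_neg]
    exact cos_le_cos_of_nonneg_of_le_pi (abs_nonneg _) (by linarith) (by linarith)
  have hprod : 2 * cos t * cos t' = cos (t - t') + sin (s + θ) := by
    rw [two_mul_cos_mul_cos, hadd, ← cos_sub_pi_div_two (s + θ)]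
    ring_nf
  have hprod_shift : cos (t - θ) * cos t' + cos (t' - θ) * cos t
      = cos θ * cos (t - t') + sin s := by
    have hsum : sin s = cos (t + t' - θ) := by
      rw [← cos_sub_pi_div_two, hadd]
      ring_nf
    rw [hsum, cos_sub (t + t'), cos_sub t θ, cos_sub t' θ, cos_sub t t', cos_add, sin_add]
    ring
  have hgap : 2 * (B * cos (t - θ) * cos t' + B * cos (t' - θ) * cos t - A * cos t * cos t')
      = (2 * B * cos θ - A) * (cos (t - t') - sin (θ - s))
        + 2 * sin θ * (B * cos (s - θ) - A * cos s) := by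
    have hsin_add : sin (s + θ) + sin (θ - s) = 2 * sin θ * cos s := by
      rw [sin_add, sin_sub]
      ring
    have hcos_shift : sin s + cos θ * sin (θ - s) = sin θ * cos (s - θ) := by
      rw [sin_sub, cos_sub]
      linear_combination sin s * (-cos_sq' θ)
    linear_combination 2 * B * hprod_shift - A * hprod - A * hsin_add + 2 * B * hcos_shift
  have hfirst := mul_nonneg (sub_nonneg.2 hAB) (sub_nonneg.2 hcos_sub)
  have hsecond := mul_nonneg hsin (sub_nonneg.2 hs)
  linarith

end Trigonometry

/-- The survival probability, in direction `t`, of the pair of points at distances `A`, `B` from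
the origin in the directions `0`, `θ`, the third point being the origin. -/
noncomputable def apexProb (A B θ t : ℝ) : ℝ :=
  cutProb (A * cos t) (B * cos (t - θ)) 0

section ApexProb

variable {A B θ s R t : ℝ}

theorem apexProb_reflect (A B θ t : ℝ) : apexProb A B θ (θ - t) = apexProb B A θ t := by
  rw [apexProb, apexProb, cutProb_comm, sub_sub_cancel_left, cos_neg, ← cos_neg (θ - t), neg_sub]

theorem apexProb_periodic (A B θ : ℝ) : Function.Periodic (apexProb A B θ) π := by
  intro t
  rw [apexProb, apexProb, add_sub_right_comm, cos_add_pi, cos_add_pi, mul_neg, mul_neg,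
    ← neg_zero, cutProb_neg, neg_zero]

theorem intervalIntegrable_apexProb (A B θ a b : ℝ) :
    IntervalIntegrable (apexProb A B θ) volume a b :=
  intervalIntegrable_cutProb_comp (by fun_prop) (by fun_prop) measurable_const a b

theorem apexProb_eq_div (hB : 0 < B) (hθ : 0 ≤ θ) (ht : t ∈ Set.Ioo (θ - π / 2) (π / 2))
    (hle : B * cos (t - θ) ≤ A * cos t) :
    apexProb A B θ t = B * cos (t - θ) / (A * cos t) :=
  cutProb_zero_eq_div
    (mul_pos hB (cos_pos_of_mem_Ioo ⟨by linarith [ht.1], by linarith [ht.2]⟩)) hle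

theorem one_le_apexProb_add_apexProb (hA : 0 < A) (hB : 0 < B) (hθ : 0 ≤ θ) (hθπ : θ ≤ π)
    (hAB : A ≤ 2 * B * cos θ) (hsπ : s ≤ π / 2) (hR : 0 ≤ R)
    (hcross : ∀ t, A * cos t - B * cos (t - θ) = R * sin (s - t))
    (ht : t ∈ Set.Ioo (θ - π / 2) s) :
    1 ≤ apexProb A B θ t + apexProb A B θ (θ - π / 2 + s - t) := by
  have hratio {u : ℝ} (hu : u ∈ Set.Ioo (θ - π / 2) s) :
      0 < cos u ∧ apexProb A B θ u = B * cos (u - θ) / (A * cos u) := by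
    refine ⟨cos_pos_of_mem_Ioo ⟨by linarith [hu.1], by linarith [hu.2]⟩,
      apexProb_eq_div hB hθ ⟨hu.1, hu.2.trans_le hsπ⟩ (sub_nonneg.1 ?_)⟩
    rw [hcross]
    exact mul_nonneg hR
      (sin_nonneg_of_nonneg_of_le_pi (by linarith [hu.2]) (by linarith [hu.1]))
  set t' := θ - π / 2 + s - t with ht'_def
  have ht' : t' ∈ Set.Ioo (θ - π / 2) s := ⟨by linarith [ht.2], by linarith [ht.1]⟩
  obtain ⟨hcos, heq⟩ := hratio ht
  obtain ⟨hcos', heq'⟩ := hratio ht'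
  have hs : A * cos s = B * cos (s - θ) := by
    simpa only [sub_self, sin_zero, mul_zero, sub_eq_zero] using hcross s
  have hmain : A * cos t * cos t' ≤ B * cos (t - θ) * cos t' + B * cos (t' - θ) * cos t :=
    mul_cos_mul_cos_le_of_add_eq (sin_nonneg_of_nonneg_of_le_pi hθ hθπ) hAB hs.le
      (by linarith) (by linarith)
      (abs_le.2 ⟨by linarith [ht.1, ht'.2], by linarith [ht.2, ht'.1]⟩)
  calc 1 ≤ (B * cos (t - θ) * cos t' + B * cos (t' - θ) * cos t) / (A * cos t * cos t') :=
        (one_le_div (by positivity)).2 hmain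
    _ = apexProb A B θ t + apexProb A B θ t' := by
        rw [heq, heq']
        field_simp

theorem half_mul_length_le_integral_apexProb (hA : 0 < A) (hB : 0 < B) (hθ : 0 ≤ θ) (hθπ : θ ≤ π)
    (hAB : A ≤ 2 * B * cos θ) (hs : s ∈ Set.Icc (θ - π / 2) (π / 2)) (hR : 0 ≤ R)
    (hcross : ∀ t, A * cos t - B * cos (t - θ) = R * sin (s - t)) :
    1 / 2 * (s - (θ - π / 2)) ≤ ∫ t in (θ - π / 2)..s, apexProb A B θ t := by
  refine mul_sub_le_integral_of_two_mul_le_add_reflect hs.1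
    (intervalIntegrable_apexProb A B θ _ _) fun t ht => ?_
  rw [mul_one_div_cancel two_ne_zero]
  exact one_le_apexProb_add_apexProb hA hB hθ hθπ hAB hs.2 hR hcross ht

theorem half_mul_pi_sub_le_integral_apexProb (hA : 0 < A) (hB : 0 < B) (hθ : 0 ≤ θ)
    (hθπ : θ < π) (hAB : A ≤ 2 * B * cos θ) (hBA : B ≤ 2 * A * cos θ) :
    1 / 2 * (π - θ) ≤ ∫ t in (θ - π / 2)..(π / 2), apexProb A B θ t := by
  obtain ⟨s, hs, R, hR, hcross⟩ := exists_mul_cos_sub_mul_cos_eq_mul_sin hA hB.le hθ hθπ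
  have hcross_reflect (t : ℝ) : B * cos t - A * cos (t - θ) = R * sin (θ - s - t) := by
    have h := hcross (θ - t)
    rw [sub_sub_cancel_left, cos_neg, ← cos_neg (θ - t), neg_sub] at h
    rw [← neg_sub, h, ← mul_neg, ← sin_neg]
    ring_nf
  have hleft := half_mul_length_le_integral_apexProb hA hB hθ hθπ.le hAB hs hR hcross
  have hright := half_mul_length_le_integral_apexProb hB hA hθ hθπ.le hBA
    (s := θ - s) ⟨by linarith [hs.2], by linarith [hs.1]⟩ hR hcross_reflect
  have hreflect : ∫ t in (θ - π / 2)..(θ - s), apexProb B A θ t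
      = ∫ t in s..(π / 2), apexProb A B θ t := by
    simp only [← apexProb_reflect A B θ, intervalIntegral.integral_comp_sub_left, sub_sub_cancel]
  rw [hreflect] at hright
  rw [← intervalIntegral.integral_add_adjacent_intervals
    (intervalIntegrable_apexProb A B θ (θ - π / 2) s) (intervalIntegrable_apexProb A B θ s (π / 2))]
  linarith

theorem half_mul_pi_sub_le_integral_apexProb_comp_sub (hA : 0 < A) (hB : 0 < B)
    (hθ : 0 ≤ θ) (hθπ : θ < π) (hAB : A ≤ 2 * B * cos θ) (hBA : B ≤ 2 * A * cos θ) (α : ℝ) :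
    1 / 2 * (π - θ) ≤ ∫ t in (0 : ℝ)..π, apexProb A B θ (t - α) := by
  have hshift : ∫ t in (0 : ℝ)..π, apexProb A B θ (t - α)
      = ∫ t in (θ - π / 2)..(θ - π / 2 + π), apexProb A B θ t := by
    rw [intervalIntegral.integral_comp_sub_right,
      ← (apexProb_periodic A B θ).intervalIntegral_add_eq (0 - α)]
    ring_nf
  rw [hshift]
  exact (half_mul_pi_sub_le_integral_apexProb hA hB hθ hθπ hAB hBA).trans
    (intervalIntegral.integral_mono_interval le_rfl (by linarith) (by linarith)
      (.of_forall fun t => cutProb_nonneg _ _ _) (intervalIntegrable_apexProb A B θ _ _))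

end ApexProb

section Plane

open InnerProductGeometry

theorem norm_le_two_mul_norm_mul_cos_angle {V : Type*} [NormedAddCommGroup V]
    [InnerProductSpace ℝ V] {a b : V} (h : ‖a - b‖ ≤ ‖b‖) :
    ‖a‖ ≤ 2 * ‖b‖ * cos (angle a b) := by
  rcases eq_or_ne a 0 with rfl | ha
  · simp
  · have hcosines := norm_sub_sq_eq_norm_sq_add_norm_sq_sub_two_mul_norm_mul_norm_mul_cos_angle a b
    have hsq : ‖a - b‖ * ‖a - b‖ ≤ ‖b‖ * ‖b‖ := by gcongr
    refine le_of_mul_le_mul_left ?_ (norm_pos_iff.2 ha)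
    linarith

theorem proj_sub (a b : EuclideanSpace ℝ (Fin 2)) (φ : ℝ) :
    proj (a - b) φ = proj a φ - proj b φ := by
  simp only [proj, PiLp.sub_apply]
  ring

theorem exists_polar (a : EuclideanSpace ℝ (Fin 2)) :
    ∃ α, a 0 = ‖a‖ * cos α ∧ a 1 = ‖a‖ * sin α := by
  set z : ℂ := ⟨a 0, a 1⟩
  have hnorm : ‖a‖ = ‖z‖ := by
    simp only [EuclideanSpace.norm_eq, Complex.norm_def, Complex.normSq_apply, Fin.sum_univ_two,
      Real.norm_eq_abs, abs_mul_abs_self, sq, z]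
  rw [hnorm]
  exact ⟨z.arg, (Complex.norm_mul_cos_arg z).symm, (Complex.norm_mul_sin_arg z).symm⟩

theorem proj_eq_norm_mul_cos_sub {a : EuclideanSpace ℝ (Fin 2)} {α : ℝ}
    (h0 : a 0 = ‖a‖ * cos α) (h1 : a 1 = ‖a‖ * sin α) (φ : ℝ) :
    proj a φ = ‖a‖ * cos (φ - α) := by
  rw [proj, cos_sub]
  linear_combination cos φ * h0 + sin φ * h1

theorem cos_angle_eq_cos_sub {a b : EuclideanSpace ℝ (Fin 2)} {α β : ℝ} (ha : a ≠ 0) (hb : b ≠ 0)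
    (ha0 : a 0 = ‖a‖ * cos α) (ha1 : a 1 = ‖a‖ * sin α)
    (hb0 : b 0 = ‖b‖ * cos β) (hb1 : b 1 = ‖b‖ * sin β) :
    cos (angle a b) = cos (β - α) := by
  have hinner : inner ℝ a b = a 0 * b 0 + a 1 * b 1 := by
    simp only [PiLp.inner_apply, Fin.sum_univ_two, RCLike.inner_apply, conj_trivial, mul_comm]
  have hnorm : ‖a‖ * ‖b‖ ≠ 0 := mul_ne_zero (norm_ne_zero_iff.2 ha) (norm_ne_zero_iff.2 hb)
  rw [cos_angle, hinner, ha0, ha1, hb0, hb1, cos_sub, div_eq_iff hnorm]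
  ring

theorem exists_cutProb_proj_eq_apexProb {a b : EuclideanSpace ℝ (Fin 2)} (ha : a ≠ 0)
    (hb : b ≠ 0) :
    ∃ α, (∀ φ, cutProb (proj a φ) (proj b φ) 0 = apexProb ‖a‖ ‖b‖ (angle a b) (φ - α)) ∨
      ∀ φ, cutProb (proj a φ) (proj b φ) 0 = apexProb ‖b‖ ‖a‖ (angle a b) (φ - α) := by
  obtain ⟨α, ha0, ha1⟩ := exists_polar a
  obtain ⟨β, hb0, hb1⟩ := exists_polar b
  have hproj_a := proj_eq_norm_mul_cos_sub ha0 ha1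
  have hproj_b := proj_eq_norm_mul_cos_sub hb0 hb1
  obtain ⟨k, hk | hk⟩ := Real.cos_eq_cos_iff.1 (cos_angle_eq_cos_sub ha hb ha0 ha1 hb0 hb1)
  · refine ⟨α, Or.inl fun φ => ?_⟩
    have hdir : φ - α - angle a b = φ - β + k * (2 * π) := by linarith
    rw [apexProb, hdir, cos_add_int_mul_two_pi, hproj_a, hproj_b]
  · refine ⟨β, Or.inr fun φ => ?_⟩
    have hdir : φ - β - angle a b = φ - α - k * (2 * π) := by linarith
    rw [apexProb, hdir, cos_sub_int_mul_two_pi, hproj_a, hproj_b, cutProb_comm]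

theorem half_mul_pi_sub_angle_le_integral_cutProb_proj {a b : EuclideanSpace ℝ (Fin 2)} (ha : a ≠ 0)
    (h_le_left : ‖a - b‖ ≤ ‖a‖) (h_le_right : ‖a - b‖ ≤ ‖b‖) :
    1 / 2 * (π - angle a b) ≤ ∫ φ in (0 : ℝ)..π, cutProb (proj a φ) (proj b φ) 0 := by
  have hb : b ≠ 0 := by
    rintro rfl
    exact ha (by simpa using h_le_right)
  have hAB : ‖a‖ ≤ 2 * ‖b‖ * cos (angle a b) := norm_le_two_mul_norm_mul_cos_angle h_le_right
  have hBA : ‖b‖ ≤ 2 * ‖a‖ * cos (angle a b) := by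
    rw [angle_comm]
    exact norm_le_two_mul_norm_mul_cos_angle (norm_sub_rev a b ▸ h_le_left)
  have hA : 0 < ‖a‖ := norm_pos_iff.2 ha
  have hB : 0 < ‖b‖ := norm_pos_iff.2 hb
  have hangle : angle a b < π := by
    refine (angle_le_pi a b).lt_of_ne fun h => ?_
    rw [h, cos_pi] at hAB
    linarith
  obtain ⟨α, h | h⟩ := exists_cutProb_proj_eq_apexProb ha hb
  · simp only [h]
    exact half_mul_pi_sub_le_integral_apexProb_comp_sub hA hB (angle_nonneg a b) hangle hAB hBA α
  · simp only [h]
    exact half_mul_pi_sub_le_integral_apexProb_comp_sub hB hA (angle_nonneg a b) hangle hBA hAB α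

end Plane

theorem survProb_eq_integral_proj_sub (vi vj vm : EuclideanSpace ℝ (Fin 2)) :
    survProb vi vj vm =
      1 / π * ∫ φ in (0 : ℝ)..π, cutProb (proj (vi - vm) φ) (proj (vj - vm) φ) 0 := by
  have hshift (φ : ℝ) : cutProb (proj (vi - vm) φ) (proj (vj - vm) φ) 0
      = cutProb (proj vi φ) (proj vj φ) (proj vm φ) := by
    rw [proj_sub, proj_sub, ← sub_self (proj vm φ), cutProb_sub_const]
  simp only [survProb, hshift]

theorem stmt2_general (v1 v2 v3 : EuclideanSpace ℝ (Fin 2)) (hne : v1 ≠ v2)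
    (h13_le_23 : ‖v1 - v3‖ ≤ ‖v2 - v3‖) (h13_le_12 : ‖v1 - v3‖ ≤ ‖v1 - v2‖)
    (θ₃ : ℝ) (hθ₃ : θ₃ = InnerProductGeometry.angle (v1 - v2) (v3 - v2)) :
    survProb v1 v3 v2 ≥ (Real.pi - θ₃) / (2 * Real.pi) := by
  have hopp : ‖(v1 - v2) - (v3 - v2)‖ = ‖v1 - v3‖ := by rw [sub_sub_sub_cancel_right]
  have hint : 1 / 2 * (π - θ₃) ≤
      ∫ φ in (0 : ℝ)..π, cutProb (proj (v1 - v2) φ) (proj (v3 - v2) φ) 0 :=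
    hθ₃ ▸ half_mul_pi_sub_angle_le_integral_cutProb_proj (sub_ne_zero.2 hne)
      (hopp.trans_le h13_le_12) (hopp.trans_le (norm_sub_rev v2 v3 ▸ h13_le_23))
  calc (π - θ₃) / (2 * π) = 1 / π * (1 / 2 * (π - θ₃)) := by field_simp
    _ ≤ survProb v1 v3 v2 := by
      rw [survProb_eq_integral_proj_sub]
      gcongr

theorem stmt2 (v1 v2 v3 : EuclideanSpace ℝ (Fin 2))
    (hcol : ¬ Collinear ℝ ({v1, v2, v3} : Set (EuclideanSpace ℝ (Fin 2))))
    (h13 : ‖v1 - v3‖ ≤ ‖v2 - v3‖) (h23 : ‖v2 - v3‖ ≤ ‖v1 - v2‖)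
    (θ₃ : ℝ) (hθ₃ : θ₃ = InnerProductGeometry.angle (v1 - v2) (v3 - v2)) :
    survProb v1 v3 v2 ≥ (Real.pi - θ₃) / (2 * Real.pi) := by
  have hne : v1 ≠ v2 := fun h => hcol (by simp [h, collinear_pair])
  exact stmt2_general v1 v2 v3 hne h13 (h13.trans h23) θ₃ hθ₃
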